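/- For every integer n > 2^4 = 16, every positive integer N, and every n-linear form U : (ℂ^N)^n → ℂ, one has (∑_{i₁,…,iₙ=1}^N |U(e_{i₁},…,e_{iₙ})|^{2n/(n+1)})^{(n+1)/(2n)} ≤ 1.01089344604 · (n-1)^{0.304975} · ‖U‖. -/

import Mathlib

open Real

/-- The Bohnenblust--Hille quantity of an `n`-linear form on `ℓ_∞^N` over `ℂ`:
`(∑_{i₁,…,iₙ} |U(e_{i₁},…,e_{iₙ})|^{2n/(n+1)})^{(n+1)/(2n)}`. -/
noncomputable def BHcomplex (n N : ℕ)
    (U : ContinuousMultilinearMap ℂ (fun _ : Fin n => (Fin N → ℂ)) ℂ) : ℝ :=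
  (∑ i : Fin n → Fin N,
      ‖U (fun k => Pi.single (i k) (1 : ℂ))‖ ^ ((2 * n : ℝ) / (n + 1)))
    ^ ((n + 1 : ℝ) / (2 * n))

open scoped NNReal ENNReal

theorem holder_fin {X J : Type*} [Fintype X] [Fintype J] (u : J → X → ℝ≥0) (θ : J → ℝ)
    (h0 : ∀ j, 0 ≤ θ j) (h1 : ∑ j, θ j = 1) :
    ∑ x, ∏ j, u j x ^ θ j ≤ ∏ j, (∑ x, u j x) ^ θ j := by
  let _ : MeasurableSpace X := ⊤
  have := ENNReal.lintegral_prod_norm_pow_le (μ := MeasureTheory.Measure.count) (α := X)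
    (Finset.univ : Finset J) (f := fun j x => (u j x : ℝ≥0∞)) (p := θ)
    (fun i _ => (measurable_of_finite _).aemeasurable) h1 (fun i _ => h0 i)
  simp only [MeasureTheory.lintegral_count, tsum_fintype] at this
  rw [← ENNReal.coe_le_coe]
  simpa [ENNReal.ofNNReal_finsetSum, ENNReal.ofNNReal_finsetProd, ENNReal.coe_rpow_of_nonneg _ (h0 _)] using this

/-- mixed norm, coordinate `0` outermost -/
noncomputable def mixN {X : Type} [Fintype X] : (r : ℕ) → (q : Fin r → ℝ) → ((Fin r → X) → ℝ≥0) → ℝ≥0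
  | 0, _, f => f Fin.elim0
  | r + 1, q, f =>
    (∑ x, (mixN r (fun c => q c.succ) (fun i => f (Fin.cons x i))) ^ q 0) ^ (1 / q 0)

theorem mixN_holder {X : Type} [Fintype X] {J : Type} [Fintype J] (θ : J → ℝ) (h0 : ∀ j, 0 ≤ θ j)
    (ρ : ℝ) (hρ : 0 < ρ) (r : ℕ) : ∀ (q : J → Fin r → ℝ) (_ : ∀ j c, 0 < q j c)
    (_ : ∀ c, ∑ j, θ j / q j c = 1 / ρ) (f : J → (Fin r → X) → ℝ≥0),
    mixN r (fun _ => ρ) (fun i => ∏ j, f j i ^ θ j) ≤ ∏ j, mixN r (q j) (f j) ^ θ j := by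
  induction r with
  | zero => intro q hq hs f; simp [mixN]
  | succ r ih =>
    intro q hq hs f
    simp only [mixN]
    have h1 : ∀ x, mixN r (fun _ => ρ) (fun i => ∏ j, f j (Fin.cons x i) ^ θ j) ≤
        ∏ j, mixN r (fun c => q j c.succ) (fun i => f j (Fin.cons x i)) ^ θ j := fun x =>
      ih (fun j c => q j c.succ) (fun j c => hq j _) (fun c => hs _) (fun j i => f j (Fin.cons x i))
    have h2 := holder_fin (fun j x => mixN r (fun c => q j c.succ) (fun i => f j (Fin.cons x i)) ^ q j 0)
      (fun j => θ j * ρ / q j 0) (fun j => by have := h0 j; have := hq j 0; positivity)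
      (by
        have := hs 0
        simp_rw [mul_div_right_comm, ← Finset.sum_mul]
        rw [this]; field_simp)
    calc _ ≤ (∑ x, (∏ j, mixN r (fun c => q j c.succ) (fun i => f j (Fin.cons x i)) ^ θ j) ^ ρ) ^ (1 / ρ) := by
            gcongr with x; exact h1 x
      _ = (∑ x, ∏ j, (mixN r (fun c => q j c.succ) (fun i => f j (Fin.cons x i)) ^ q j 0) ^ (θ j * ρ / q j 0)) ^ (1 / ρ) := by
            congr 2; funext x
            rw [← NNReal.finsetProd_rpow]
            refine Finset.prod_congr rfl fun j _ => ?_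
            rw [← NNReal.rpow_mul, ← NNReal.rpow_mul]
            congr 1; have := hq j 0; field_simp
      _ ≤ _ := by
            refine (NNReal.rpow_le_rpow h2 (by positivity)).trans (le_of_eq ?_)
            rw [← NNReal.finsetProd_rpow]
            refine Finset.prod_congr rfl fun j _ => ?_
            rw [← NNReal.rpow_mul, ← NNReal.rpow_mul]
            congr 1; have := hq j 0; field_simp

theorem sum_cons {X : Type} [Fintype X] {M : Type*} [AddCommMonoid M] (r : ℕ) (g : (Fin (r+1) → X) → M) :
    ∑ i, g i = ∑ x, ∑ i, g (Fin.cons x i) := by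
  rw [← (Fin.consEquiv (fun _ => X)).sum_comp, Fintype.sum_prod_type]
  rfl

theorem mixN_const {X : Type} [Fintype X] (p : ℝ) (hp : 0 < p) (r : ℕ) :
    ∀ f : (Fin r → X) → ℝ≥0, mixN r (fun _ => p) f = (∑ i, f i ^ p) ^ (1 / p) := by
  induction r with
  | zero => 
    intro f
    simp only [mixN, Fintype.sum_unique]
    rw [← NNReal.rpow_mul, mul_one_div_cancel hp.ne', NNReal.rpow_one]
    congr 1
  | succ r ih =>
    intro f
    simp only [mixN, ih]
    rw [sum_cons]
    congr 2; funext x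
    rw [← NNReal.rpow_mul, one_div_mul_cancel hp.ne', NNReal.rpow_one]

theorem lp_sum_le {X I : Type*} [Fintype X] [Fintype I] (p : ℝ) (hp : 1 ≤ p) (v : I → X → ℝ≥0) :
    (∑ x, (∑ i, v i x) ^ p) ^ (1 / p) ≤ ∑ i, (∑ x, v i x ^ p) ^ (1 / p) := by
  classical
  have : ∀ s : Finset I, (∑ x, (∑ i ∈ s, v i x) ^ p) ^ (1 / p) ≤ ∑ i ∈ s, (∑ x, v i x ^ p) ^ (1 / p) := by
    intro s
    have hp0 : p ≠ 0 := by linarith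
    induction s using Finset.induction_on with
    | empty => simp [hp0]
    | insert a s ha ih =>
      simp only [Finset.sum_insert ha]
      exact (NNReal.Lp_add_le _ _ _ hp).trans (by gcongr)
  exact this _

theorem mixN_mink {X : Type} [Fintype X] (p : ℝ) (hp : 0 < p) (hp2 : p ≤ 2) (r : ℕ) :
    ∀ (j : Fin (r+1)) (f : (Fin (r+1) → X) → ℝ≥0),
    mixN (r+1) (fun c => if c = j then 2 else p) f ≤
      (∑ i : Fin r → X, (∑ l, f (Fin.insertNth j l i) ^ (2:ℝ)) ^ (p / 2)) ^ (1 / p) := by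
  have base : ∀ (r : ℕ) (f : (Fin (r+1) → X) → ℝ≥0),
      mixN (r+1) (fun c => if c = 0 then 2 else p) f ≤
      (∑ i : Fin r → X, (∑ l, f (Fin.insertNth 0 l i) ^ (2:ℝ)) ^ (p / 2)) ^ (1 / p) := by
    intro r f
    simp only [mixN, Fin.succ_ne_zero, if_false, if_true, mixN_const p hp]
    have h := lp_sum_le (2 / p) (by rw [le_div_iff₀ hp]; linarith)
      (fun (i : Fin r → X) (l : X) => f (Fin.cons l i) ^ p)
    have h' := NNReal.rpow_le_rpow h (z := 1 / p) (by positivity)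
    convert h' using 1
    · rw [← NNReal.rpow_mul]
      congr 1
      · refine Finset.sum_congr rfl fun x _ => ?_
        rw [← NNReal.rpow_mul]; congr 1; field_simp
      · field_simp
    · congr 1
      refine Finset.sum_congr rfl fun i _ => ?_
      congr 1
      · refine Finset.sum_congr rfl fun x _ => ?_
        rw [← NNReal.rpow_mul, Fin.insertNth_zero']; congr 1; field_simp
      · field_simp
  induction r with
  | zero => intro j f; obtain rfl : j = 0 := Fin.fin_one_eq_zero j; exact base 0 f
  | succ r ih =>
    intro j f
    induction j using Fin.cases with
    | zero => exact base _ f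
    | succ j =>
      rw [mixN]
      simp only [Fin.succ_inj, (Fin.succ_ne_zero j).symm, if_false]
      rw [sum_cons]
      gcongr with x
      have := NNReal.rpow_le_rpow (ih j (fun i => f (Fin.cons x i))) hp.le
      rw [← NNReal.rpow_mul, one_div_mul_cancel hp.ne', NNReal.rpow_one] at this
      refine this.trans (le_of_eq ?_)
      refine Finset.sum_congr rfl fun i _ => ?_
      congr 1
      refine Finset.sum_congr rfl fun l _ => ?_
      rw [Fin.insertNth_succ_cons]

theorem blei {X : Type} [Fintype X] (n : ℕ) (hn : 1 ≤ n) (f : (Fin (n+1) → X) → ℝ≥0) (B : ℝ≥0)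
    (hB : ∀ j, ∑ i : Fin n → X, (∑ l, f (Fin.insertNth j l i) ^ (2:ℝ)) ^ ((n:ℝ) / (n + 1)) ≤
      B ^ ((2 * n : ℝ) / (n + 1))) :
    ∑ i, f i ^ ((2 * (n + 1) : ℝ) / (n + 2)) ≤ B ^ ((2 * (n + 1) : ℝ) / (n + 2)) := by
  have hn0 : (0:ℝ) < n := by exact_mod_cast hn
  set p : ℝ := (2 * n : ℝ) / (n + 1) with hp
  set ρ : ℝ := (2 * (n + 1) : ℝ) / (n + 2) with hρ
  have hp0 : 0 < p := by positivity
  have hp2 : p ≤ 2 := by rw [hp, div_le_iff₀ (by positivity)]; linarith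
  have hρ0 : 0 < ρ := by positivity
  have h1 := mixN_holder (X := X) (J := Fin (n+1)) (fun _ => 1 / ((n:ℝ) + 1)) (fun _ => by positivity) ρ hρ0 (n+1)
    (fun j c => if c = j then 2 else p) (fun j c => by split_ifs <;> positivity)
    (fun c => by
      rw [← Finset.add_sum_erase _ _ (Finset.mem_univ c)]
      rw [Finset.sum_congr rfl (g := fun _ => 1 / ((n:ℝ) + 1) / p)
        (fun x hx => by rw [if_neg (Finset.ne_of_mem_erase hx).symm])]
      simp [hp, hρ]
      field_simp
      ring) (fun _ => f)
  have h2 : ∀ j : Fin (n+1), mixN (n+1) (fun c => if c = j then 2 else p) f ≤ B := by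
    intro j
    refine (mixN_mink p hp0 hp2 n j f).trans ?_
    have e : p / 2 = (n:ℝ) / (n + 1) := by rw [hp]; field_simp
    rw [e]
    refine (NNReal.rpow_le_rpow (hB j) (by positivity)).trans (le_of_eq ?_)
    rw [← NNReal.rpow_mul, mul_one_div_cancel hp0.ne', NNReal.rpow_one]
  have h3 : ∏ j : Fin (n+1), mixN (n+1) (fun c => if c = j then 2 else p) f ^ (1 / ((n:ℝ) + 1)) ≤ B := by
    calc _ ≤ ∏ j : Fin (n+1), B ^ (1 / ((n:ℝ) + 1)) := by
            refine Finset.prod_le_prod' fun j _ => ?_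
            exact NNReal.rpow_le_rpow (h2 j) (by positivity)
      _ = B := by
            rw [Finset.prod_const, Finset.card_univ, Fintype.card_fin, ← NNReal.rpow_natCast, ← NNReal.rpow_mul]
            push_cast
            rw [one_div_mul_cancel (by positivity), NNReal.rpow_one]
  have h4 := h1.trans h3
  rw [mixN_const ρ hρ0] at h4
  have h5 := NNReal.rpow_le_rpow h4 hρ0.le
  rw [← NNReal.rpow_mul, one_div_mul_cancel hρ0.ne', NNReal.rpow_one] at h5
  convert h5 using 3 with i
  rw [Finset.prod_const, Finset.card_univ, Fintype.card_fin, ← NNReal.rpow_natCast, ← NNReal.rpow_mul]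
  push_cast
  rw [one_div_mul_cancel (by positivity), NNReal.rpow_one]

/-- a primitive fifth root of unity -/
noncomputable def zt : ℂ := Complex.exp (2 * Real.pi * Complex.I / (5:ℕ))

theorem zt_prim : IsPrimitiveRoot zt 5 := Complex.isPrimitiveRoot_exp 5 (by norm_num)

theorem zt_pow : zt ^ 5 = 1 := zt_prim.pow_eq_one

theorem zt_norm : ‖zt‖ = 1 := zt_prim.norm'_eq_one (by norm_num)

theorem zt_sum : 1 + zt + zt^2 + zt^3 + zt^4 = 0 := by
  have := zt_prim.geom_sum_eq_zero (by norm_num)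
  simpa [Finset.sum_range_succ] using this

theorem normSq_add_pow (u b : ℂ) (c : Fin 5) :
    ((Complex.normSq (b * zt ^ (c:ℕ) + u) : ℝ) : ℂ) =
      (Complex.normSq u : ℂ) + Complex.normSq b + (b * (starRingEnd ℂ u)) * zt ^ (c:ℕ)
        + ((starRingEnd ℂ b) * u) * (zt ^ (c:ℕ)) ^ 4 := by
  have hc : (starRingEnd ℂ) (zt ^ (c:ℕ)) = (zt ^ (c:ℕ)) ^ 4 := by
    have h1 : (zt ^ (c:ℕ)) * (zt ^ (c:ℕ)) ^ 4 = 1 := by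
      rw [← pow_succ', ← pow_mul, mul_comm, pow_mul, zt_pow, one_pow]
    have h2 : (zt ^ (c:ℕ)) * (starRingEnd ℂ) (zt ^ (c:ℕ)) = 1 := by
      rw [Complex.mul_conj, Complex.normSq_eq_norm_sq]; simp [zt_norm]
    have h3 : (zt ^ (c:ℕ)) ≠ 0 := fun h => by simp [h] at h1
    exact mul_left_cancel₀ h3 (h2.trans h1.symm)
  have h2 : (zt ^ (c:ℕ)) * (starRingEnd ℂ) (zt ^ (c:ℕ)) = 1 := by
      rw [Complex.mul_conj, Complex.normSq_eq_norm_sq]; simp [zt_norm]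
  rw [← hc]
  simp only [Complex.normSq_eq_conj_mul_self, map_add, map_mul]
  linear_combination (starRingEnd ℂ b * b) * h2

theorem five_sum (X v w : ℂ) :
    (∑ c : Fin 5, (X + v * zt ^ (c:ℕ) + w * (zt ^ (c:ℕ)) ^ 4) = 5 * X) ∧
    (∑ c : Fin 5, (X + v * zt ^ (c:ℕ) + w * (zt ^ (c:ℕ)) ^ 4)^2 = 5 * (X^2 + 2 * (v * w))) ∧
    (∑ c : Fin 5, (X + v * zt ^ (c:ℕ) + w * (zt ^ (c:ℕ)) ^ 4)^3 = 5 * (X^3 + 6 * X * (v * w))) ∧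
    (∑ c : Fin 5, (X + v * zt ^ (c:ℕ) + w * (zt ^ (c:ℕ)) ^ 4)^4 =
      5 * (X^4 + 12 * X^2 * (v * w) + 6 * (v*w)^2)) := by
  have e2 : ∀ z : ℂ, z^5 = 1 → (X + v * z + w * z^4)^2 = X^2 + 2 * (v * w) + 2*X*v*z + v^2*z^2 + w^2 * z^3
     + 2*X*w*z^4 := by
    intro z hz
    linear_combination (2 * v * w + w^2 * z^3) * hz
  have e3 : ∀ z : ℂ, z^5 = 1 → (X + v * z + w * z^4)^3 = X^3 + 6 * X * (v * w) + (3*X^2*v + 3 * v^2*w) * z +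
      (3*X*v^2+w^3)*z^2+(3*X*w^2+v^3)*z^3 + (3*X^2*w+3*v*w^2)*z^4 := by
    intro z hz
    have h := e2 z hz
    rw [pow_succ, h]
    linear_combination (4*X*v*w + v^2*w*z + 2*X*w^2*z^3 + w^3*z^2) * hz
  have e4 : ∀ z : ℂ, z^5 = 1 → (X + v * z + w * z^4)^4 = (X^4 + 12 * X^2 * (v * w) + 6 * (v*w)^2) +
      ((X^3 + 6 * X * (v * w))*v + (3*X^2*v + 3 * v^2*w)*X + w*(3*X*v^2+w^3)) * z +
      ((3*X^2*v + 3 * v^2*w)*v + (3*X*v^2+w^3)*X + w * (3*X*w^2+v^3))*z^2 +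
      ((3*X*v^2+w^3)*v + (3*X*w^2+v^3)*X + w*(3*X^2*w+3*v*w^2))*z^3 +
      ((3*X*w^2+v^3)*v + (3*X^2*w+3*v*w^2)*X + (X^3 + 6 * X * (v * w))*w)*z^4 := by
    intro z hz
    have h := e3 z hz
    rw [pow_succ, h]
    linear_combination ((3*X^2*w+3*v*w^2)*v + w*(3*X^2*v + 3 * v^2*w) + w*(3*X*v^2+w^3)*z + w*(3*X*w^2+v^3)*z^2
      + w*(3*X^2*w+3*v*w^2)*z^3) * hz
  have hs : ∀ K0 K1 K2 K3 K4 : ℂ, ∑ c : Fin 5, (K0 + K1 * zt ^ (c:ℕ) + K2 * (zt ^ (c:ℕ))^2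
      + K3 * (zt ^ (c:ℕ))^3 + K4 * (zt ^ (c:ℕ))^4) = 5 * K0 := by
    intro K0 K1 K2 K3 K4
    have h0 := zt_sum
    have h1 := zt_pow
    simp only [Fin.sum_univ_five]
    norm_num
    linear_combination (K1 + K2 + K3 + K4) * h0 + (K2 * (zt + zt^3) + K3 * (zt + zt^4 + zt^2 * (zt^5+1))
      + K4 * (zt^3 + zt^2*(zt^5+1) + zt*(zt^10+zt^5+1))) * h1
  have hz : ∀ c : Fin 5, (zt ^ (c:ℕ))^5 = 1 := fun c => by
    rw [← pow_mul, mul_comm, pow_mul, zt_pow, one_pow]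
  refine ⟨?_, ?_, ?_, ?_⟩
  · rw [← hs X v 0 0 w]
    exact Finset.sum_congr rfl fun c _ => by ring
  · simp_rw [fun c => e2 _ (hz c)]
    exact hs _ _ _ _ _
  · simp_rw [fun c => e3 _ (hz c)]
    exact hs _ _ _ _ _
  · simp_rw [fun c => e4 _ (hz c)]
    exact hs _ _ _ _ _

theorem five_sum_normSq (u b : ℂ) :
    (∑ c : Fin 5, Complex.normSq (b * zt ^ (c:ℕ) + u) = 5 * (Complex.normSq u + Complex.normSq b)) ∧
    (∑ c : Fin 5, Complex.normSq (b * zt ^ (c:ℕ) + u) ^ 2 = 5 * (Complex.normSq u ^ 2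
      + 4 * Complex.normSq b * Complex.normSq u + Complex.normSq b ^ 2)) ∧
    (∑ c : Fin 5, Complex.normSq (b * zt ^ (c:ℕ) + u) ^ 3 = 5 * (Complex.normSq u ^ 3
      + 9 * Complex.normSq b * Complex.normSq u ^ 2 + 9 * Complex.normSq b ^ 2 * Complex.normSq u
      + Complex.normSq b ^ 3)) ∧
    (∑ c : Fin 5, Complex.normSq (b * zt ^ (c:ℕ) + u) ^ 4 = 5 * (Complex.normSq u ^ 4
      + 16 * Complex.normSq b * Complex.normSq u ^ 3 + 36 * Complex.normSq b ^ 2 * Complex.normSq u ^ 2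
      + 16 * Complex.normSq b ^ 3 * Complex.normSq u + Complex.normSq b ^ 4)) := by
  obtain ⟨h1, h2, h3, h4⟩ := five_sum (Complex.normSq u + Complex.normSq b)
    (b * (starRingEnd ℂ u)) ((starRingEnd ℂ b) * u)
  have hv : (b * (starRingEnd ℂ u)) * ((starRingEnd ℂ b) * u) = Complex.normSq u * Complex.normSq b := by
    simp only [Complex.normSq_eq_conj_mul_self]; ring
  rw [hv] at h2 h3 h4
  refine ⟨?_, ?_, ?_, ?_⟩
  · apply Complex.ofReal_injective
    push_cast [normSq_add_pow]
    rw [h1]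
  · apply Complex.ofReal_injective
    push_cast [normSq_add_pow]
    rw [h2]; ring
  · apply Complex.ofReal_injective
    push_cast [normSq_add_pow]
    rw [h3]; ring
  · apply Complex.ofReal_injective
    push_cast [normSq_add_pow]
    rw [h4]; ring

/-- the Steinhaus-type sum -/
noncomputable def St {N : ℕ} (b : Fin N → ℂ) (ω : Fin N → Fin 5) : ℂ := ∑ l, b l * zt ^ (ω l : ℕ)

theorem moments (N : ℕ) : ∀ (b : Fin N → ℂ) (T x y w : ℝ), T = ∑ l, Complex.normSq (b l) →
    x = ∑ l, Complex.normSq (b l) ^ 2 → y = ∑ l, Complex.normSq (b l) ^ 3 →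
    w = ∑ l, Complex.normSq (b l) ^ 4 →
    (∑ ω, Complex.normSq (St b ω) = 5 ^ N * T) ∧
    (∑ ω, Complex.normSq (St b ω) ^ 2 = 5 ^ N * (2 * T ^ 2 - x)) ∧
    (∑ ω, Complex.normSq (St b ω) ^ 3 = 5 ^ N * (6 * T ^ 3 - 9 * T * x + 4 * y)) ∧
    (∑ ω, Complex.normSq (St b ω) ^ 4 = 5 ^ N * (24 * T ^ 4 - 72 * T^2 * x + 18 * x^2 + 64 * T * y - 33 * w)) := by
  induction N with
  | zero =>
    rintro b T x y w rfl rfl rfl rfl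
    simp [St]
  | succ N ih =>
    intro b T x y w hT hx hy hw
    rw [Fin.sum_univ_succ] at hT hx hy hw
    obtain ⟨i1, i2, i3, i4⟩ := ih (fun l => b l.succ) _ _ _ _ rfl rfl rfl rfl
    set T' := ∑ l : Fin N, Complex.normSq (b l.succ)
    set x' := ∑ l : Fin N, Complex.normSq (b l.succ) ^ 2
    set y' := ∑ l : Fin N, Complex.normSq (b l.succ) ^ 3
    set w' := ∑ l : Fin N, Complex.normSq (b l.succ) ^ 4
    have hS : ∀ (c : Fin 5) (ω : Fin N → Fin 5), St b (Fin.cons c ω) = b 0 * zt ^ (c:ℕ) + St (fun l => b l.succ) ω := by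
      intro c ω
      simp [St, Fin.sum_univ_succ]
    have key := fun ω : Fin N → Fin 5 => five_sum_normSq (St (fun l => b l.succ) ω) (b 0)
    have h0 : ∑ ω : Fin N → Fin 5, (1:ℝ) = 5 ^ N := by simp
    refine ⟨?_, ?_, ?_, ?_⟩
    · rw [sum_cons, Finset.sum_comm]
      simp_rw [hS, (key _).1]
      rw [← Finset.mul_sum, Finset.sum_add_distrib, i1]
      simp
      rw [hT]; ring
    · rw [sum_cons, Finset.sum_comm]
      simp_rw [hS, (key _).2.1]
      simp only [← Finset.mul_sum, Finset.sum_add_distrib, i1, i2]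
      simp
      rw [hT, hx]; ring
    · rw [sum_cons, Finset.sum_comm]
      simp_rw [hS, (key _).2.2.1]
      simp only [← Finset.mul_sum, Finset.sum_add_distrib, i1, i2, i3]
      simp
      rw [hT, hx, hy]; ring
    · rw [sum_cons, Finset.sum_comm]
      simp_rw [hS, (key _).2.2.2]
      simp only [← Finset.mul_sum, Finset.sum_add_distrib, i1, i2, i3, i4]
      simp
      rw [hT, hx, hy, hw]; ring

theorem psums {N : ℕ} (A : Fin N → ℝ) (hA : ∀ l, 0 ≤ A l) (h1 : ∑ l, A l = 1) :
    (∑ l, A l ^ 2) ^ 2 ≤ ∑ l, A l ^ 3 ∧ ∑ l, A l ^ 3 ≤ ∑ l, A l ^ 2 ∧ 0 ≤ ∑ l, A l ^ 3 ∧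
    ∀ lam : ℝ, 2 * lam * ∑ l, A l ^ 3 - lam ^ 2 * ∑ l, A l ^ 2 ≤ ∑ l, A l ^ 4 := by
  have hle : ∀ l, A l ≤ 1 := fun l => h1 ▸ Finset.single_le_sum (fun i _ => hA i) (Finset.mem_univ l)
  refine ⟨?_, ?_, ?_, ?_⟩
  · set x := ∑ l, A l ^ 2
    have : 0 ≤ ∑ l, A l * (A l - x) ^ 2 := Finset.sum_nonneg fun l _ => mul_nonneg (hA l) (sq_nonneg _)
    have e : ∀ c : ℝ, ∑ l, A l * (A l - c) ^ 2 = ∑ l, A l ^ 3 - 2 * c * ∑ l, A l ^ 2 + c ^ 2 * ∑ l, A l := by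
      intro c
      rw [Finset.mul_sum, Finset.mul_sum, ← Finset.sum_sub_distrib, ← Finset.sum_add_distrib]
      exact Finset.sum_congr rfl fun l _ => by ring
    rw [e, h1] at this
    change 0 ≤ ∑ l, A l ^ 3 - 2 * x * x + x ^ 2 * 1 at this
    linarith
  · refine Finset.sum_le_sum fun l _ => ?_
    nlinarith [hle l, sq_nonneg (A l)]
  · exact Finset.sum_nonneg fun l _ => by have := hA l; positivity
  · intro lam
    rw [Finset.mul_sum, Finset.mul_sum, ← Finset.sum_sub_distrib]
    refine Finset.sum_le_sum fun l _ => ?_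
    nlinarith [sq_nonneg (A l * (A l - lam))]

theorem log_four_thirds : Real.log (4/3) ≤ 0.289 := by
  have h : Real.log ((4/3:ℝ)^12) ≤ Real.log (2^5) := Real.log_le_log (by norm_num) (by norm_num)
  rw [Real.log_pow, Real.log_pow] at h
  have := Real.log_two_lt_d9
  push_cast at h
  linarith

theorem log_nine_halves : Real.log (9/2) ≤ 1.5087 := by
  have h : Real.log ((9/2:ℝ)^17) ≤ Real.log (2^37) := Real.log_le_log (by norm_num) (by norm_num)
  rw [Real.log_pow, Real.log_pow] at h
  have := Real.log_two_lt_d9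
  push_cast at h
  linarith

theorem log_le_cubic (t : ℝ) (ht : 0 < t) :
    Real.log t ≤ -1.0759 + 529/396 * t - 103/396 * t^2 + 2/99 * t^3 := by
  set D : ℝ → ℝ := fun t => -1.0759 + 529/396 * t - 103/396 * t^2 + 2/99 * t^3 - Real.log t with hD
  have hd : ∀ t : ℝ, 0 < t → HasDerivAt D (2/33 * (t - 4/3) * (t - 11/4) * (t - 9/2) / t) t := by
    intro t ht
    have h := ((((hasDerivAt_const t (-1.0759:ℝ)).add ((hasDerivAt_id t).const_mul (529/396))).sub
      ((hasDerivAt_pow 2 t).const_mul (103/396))).add ((hasDerivAt_pow 3 t).const_mul (2/99))).sub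
      (Real.hasDerivAt_log ht.ne')
    refine h.congr_deriv ?_
    field_simp
    norm_num
    ring
  have hcont : ∀ s : Set ℝ, (∀ x ∈ s, 0 < x) → ContinuousOn D s := fun s hs x hx =>
    (hd x (hs x hx)).continuousAt.continuousWithinAt
  have h1 : 0 ≤ D (4/3) := by have := log_four_thirds; simp only [hD]; norm_num at this ⊢; linarith
  have h2 : 0 ≤ D (9/2) := by have := log_nine_halves; simp only [hD]; norm_num at this ⊢; linarith
  suffices 0 ≤ D t by simp only [hD] at this; linarith
  have anti : ∀ a b : ℝ, 0 < a → a ≤ b → (∀ x, a ≤ x → x ≤ b → (x - 4/3) * (x - 11/4) * (x - 9/2) ≤ 0) → D b ≤ D a := by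
    intro a b ha hab hx
    refine antitoneOn_of_deriv_nonpos (convex_Icc a b) (hcont _ fun x hx => ha.trans_le hx.1) ?_ ?_
      (Set.left_mem_Icc.2 hab) (Set.right_mem_Icc.2 hab) hab
    · intro x hx
      rw [interior_Icc] at hx
      exact (hd x (ha.trans hx.1)).differentiableAt.differentiableWithinAt
    · intro x hx'
      rw [interior_Icc] at hx'
      rw [(hd x (ha.trans hx'.1)).deriv]
      have := hx x hx'.1.le hx'.2.le
      exact div_nonpos_of_nonpos_of_nonneg (by linarith) (ha.trans hx'.1).le
  have mon : ∀ a b : ℝ, 0 < a → a ≤ b → (∀ x, a ≤ x → x ≤ b → 0 ≤ (x - 4/3) * (x - 11/4) * (x - 9/2)) → D a ≤ D b := by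
    intro a b ha hab hx
    refine monotoneOn_of_deriv_nonneg (convex_Icc a b) (hcont _ fun x hx => ha.trans_le hx.1) ?_ ?_
      (Set.left_mem_Icc.2 hab) (Set.right_mem_Icc.2 hab) hab
    · intro x hx
      rw [interior_Icc] at hx
      exact (hd x (ha.trans hx.1)).differentiableAt.differentiableWithinAt
    · intro x hx'
      rw [interior_Icc] at hx'
      rw [(hd x (ha.trans hx'.1)).deriv]
      have := hx x hx'.1.le hx'.2.le
      exact div_nonneg (by linarith) (ha.trans hx'.1).le
  rcases le_total t (4/3) with h | h
  · refine h1.trans (anti t _ ht h fun x _ hx => ?_)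
    exact mul_nonpos_of_nonneg_of_nonpos (mul_nonneg_of_nonpos_of_nonpos (by linarith) (by linarith)) (by linarith)
  rcases le_total t (11/4) with h' | h'
  · refine h1.trans (mon _ t (by norm_num) h fun x hx hx' => ?_)
    exact mul_nonneg_of_nonpos_of_nonpos (mul_nonpos_of_nonneg_of_nonpos (by linarith) (by linarith)) (by linarith)
  rcases le_total t (9/2) with h'' | h''
  · refine h2.trans (anti t _ ht h'' fun x hx hx' => ?_)
    exact mul_nonpos_of_nonneg_of_nonpos (mul_nonneg (by linarith) (by linarith)) (by linarith)
  · refine h2.trans (mon _ t (by norm_num) h'' fun x hx hx' => ?_)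
    exact mul_nonneg (mul_nonneg (by linarith) (by linarith)) (by linarith)

theorem khin_pt (κ t : ℝ) (h0 : 0 ≤ κ) (ht : 0 ≤ t) :
    Real.exp (-(0.521 * κ)) * (t - κ * (-1.0759 * t + 529/396 * t^2 - 103/396 * t^3 + 2/99 * t^4 - 0.521 * t)) ≤ t ^ (1 - κ) := by
  rcases ht.eq_or_lt with rfl | ht
  · simp; exact Real.rpow_nonneg le_rfl _
  have e : t ^ (1 - κ) = t * (Real.exp (-(0.521 * κ)) * Real.exp (-(κ * (Real.log t - 0.521)))) := by
    rw [Real.rpow_def_of_pos ht, ← Real.exp_add]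
    nth_rewrite 2 [← Real.exp_log ht]
    rw [← Real.exp_add]
    congr 1; ring
  rw [e]
  have h1 := Real.add_one_le_exp (-(κ * (Real.log t - 0.521)))
  have h2 := mul_le_mul_of_nonneg_left (log_le_cubic t ht) h0
  have h3 : 1 - κ * (-1.0759 + 529/396 * t - 103/396 * t^2 + 2/99 * t^3 - 0.521) ≤ Real.exp (-(κ * (Real.log t - 0.521))) := by
    linarith
  have h4 := mul_le_mul_of_nonneg_left h3 (mul_nonneg (Real.exp_pos (-(0.521 * κ))).le ht.le)
  nlinarith [h4]

theorem khinB {N : ℕ} (b : Fin N → ℂ) (hb : ∑ l, Complex.normSq (b l) = 1) (κ : ℝ) (h0 : 0 ≤ κ) :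
    5 ^ N * Real.exp (-(0.521 * κ)) ≤ ∑ ω, Complex.normSq (St b ω) ^ (1 - κ) := by
  obtain ⟨m1, m2, m3, m4⟩ := moments N b _ _ _ _ rfl rfl rfl rfl
  obtain ⟨p1, p2, p3, p4⟩ := psums (fun l => Complex.normSq (b l)) (fun l => Complex.normSq_nonneg _) hb
  have hp4 := p4 0.4
  rw [hb] at m1 m2 m3 m4
  set x := ∑ l, Complex.normSq (b l) ^ 2
  set y := ∑ l, Complex.normSq (b l) ^ 3
  set w := ∑ l, Complex.normSq (b l) ^ 4
  refine le_trans ?_ (Finset.sum_le_sum fun ω _ => khin_pt κ _ h0 (Complex.normSq_nonneg _))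
  simp only [← Finset.mul_sum, Finset.sum_sub_distrib, Finset.sum_add_distrib, m1, m2, m3, m4]
  have hE := Real.exp_pos (-(0.521 * κ))
  have h5 : (0:ℝ) < 5 ^ N := by positivity
  have hc : -1.0759 + 529/396 * (2 - x) - 103/396 * (6 - 9 * x + 4 * y) + 2/99 * (24 - 72 * x + 18 * x^2 + 64 * y - 33 * w) - 0.521 ≤ 0 := by
    norm_num at hp4 ⊢
    linarith
  have := mul_nonneg (mul_nonneg h5.le hE.le) (mul_nonneg h0 (neg_nonneg.2 hc))
  linarith

theorem sqrt_pt (v : ℝ) (hv : 0 ≤ v) :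
    370/243 * v^2 - 4384/6561 * (v^2)^2 + 77824/531441 * (v^2)^3 - 1441792/129140163 * (v^2)^4 ≤ v := by
  have h : v - (370/243 * v^2 - 4384/6561 * (v^2)^2 + 77824/531441 * (v^2)^3 - 1441792/129140163 * (v^2)^4)
    = v * ((v - 9/8)^2 * (v - 9/4)^2 * (1024/6561 + 284672/1594323 * v + 360448/4782969 * v^2 + 1441792/129140163 * v^3)) := by ring
  have : 0 ≤ v * ((v - 9/8)^2 * (v - 9/4)^2 * (1024/6561 + 284672/1594323 * v + 360448/4782969 * v^2 + 1441792/129140163 * v^3)) := by positivity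
  linarith

theorem khinA {N : ℕ} (b : Fin N → ℂ) (hb : ∑ l, Complex.normSq (b l) = 1) :
    5 ^ N * 0.794 ≤ ∑ ω, Complex.normSq (St b ω) ^ (1 / 2 : ℝ) := by
  obtain ⟨m1, m2, m3, m4⟩ := moments N b _ _ _ _ rfl rfl rfl rfl
  obtain ⟨p1, p2, p3, p4⟩ := psums (fun l => Complex.normSq (b l)) (fun l => Complex.normSq_nonneg _) hb
  have hp4 := p4 0.45
  rw [hb] at m1 m2 m3 m4
  set x := ∑ l, Complex.normSq (b l) ^ 2
  set y := ∑ l, Complex.normSq (b l) ^ 3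
  set w := ∑ l, Complex.normSq (b l) ^ 4
  have hpt : ∀ t : ℝ, 0 ≤ t → 370/243 * t - 4384/6561 * t^2 + 77824/531441 * t^3 - 1441792/129140163 * t^4 ≤ t ^ (1/2:ℝ) := by
    intro t ht
    rw [← Real.sqrt_eq_rpow]
    have := sqrt_pt (Real.sqrt t) (Real.sqrt_nonneg t)
    rwa [Real.sq_sqrt ht] at this
  refine le_trans ?_ (Finset.sum_le_sum fun ω _ => hpt _ (Complex.normSq_nonneg _))
  simp only [← Finset.mul_sum, Finset.sum_sub_distrib, Finset.sum_add_distrib, m1, m2, m3, m4]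
  have h5 : (0:ℝ) < 5 ^ N := by positivity
  have hc : 0 ≤ 370/243 - 4384/6561 * (2 - x) + 77824/531441 * (6 - 9 * x + 4 * y) - 1441792/129140163 * (24 - 72 * x + 18 * x^2 + 64 * y - 33 * w) - 0.794 := by
    norm_num at hp4 ⊢
    linarith
  have := mul_nonneg h5.le hc
  linarith

/-- exponents of the constants -/
noncomputable def ec (n : ℕ) : ℝ := if n = 1 then Real.log 2 / 3 else 0.2605 / n

theorem khin_norm {N : ℕ} (n : ℕ) (hn : 1 ≤ n) (b : Fin N → ℂ) (hb : ∑ l, Complex.normSq (b l) = 1) :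
    5 ^ N ≤ Real.exp (ec n * (2 * n / (n + 1))) * ∑ ω, Complex.normSq (St b ω) ^ ((n:ℝ) / (n + 1)) := by
  have h5 : (0:ℝ) < 5 ^ N := by positivity
  rcases eq_or_ne n 1 with rfl | h
  · have h := khinA b hb
    have e : ((1:ℕ):ℝ) / ((1:ℕ) + 1) = 1 / 2 := by norm_num
    rw [e]
    have e2 : ec 1 * (2 * (1:ℕ) / ((1:ℕ) + 1)) = Real.log 2 / 3 := by simp [ec]; norm_num
    rw [e2]
    have h3 : 1 ≤ Real.exp (Real.log 2 / 3) * 0.794 := by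
      have : Real.exp (Real.log 2 / 3) ^ 3 = 2 := by
        rw [← Real.exp_nat_mul]; push_cast; rw [mul_div_cancel₀ _ (by norm_num), Real.exp_log (by norm_num)]
      by_contra hlt
      push Not at hlt
      have : (Real.exp (Real.log 2 / 3) * 0.794) ^ 3 < 1 := pow_lt_one₀ (by positivity) hlt (by norm_num)
      rw [mul_pow] at this
      norm_num at *
      linarith
    have h4 := mul_le_mul_of_nonneg_left h (Real.exp_pos (Real.log 2 / 3)).le
    nlinarith
  · have h' := khinB b hb (1 / ((n:ℝ) + 1)) (by positivity)
    have e : (1:ℝ) - 1 / ((n:ℝ) + 1) = n / (n + 1) := by field_simp; ring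
    rw [e] at h'
    have hn0 : (0:ℝ) < n := by exact_mod_cast hn
    have e2 : ec n * (2 * n / (n + 1)) = 0.521 * (1 / ((n:ℝ) + 1)) := by
      simp only [ec, if_neg h]; field_simp; norm_num
    rw [e2]
    have h4 := mul_le_mul_of_nonneg_left h' (Real.exp_pos (0.521 * (1 / ((n:ℝ) + 1)))).le
    rw [mul_left_comm, ← Real.exp_add, add_neg_cancel, Real.exp_zero, mul_one] at h4
    exact h4

theorem khin {N : ℕ} (n : ℕ) (hn : 1 ≤ n) (b : Fin N → ℂ) :
    5 ^ N * (∑ l, Complex.normSq (b l)) ^ ((n:ℝ) / (n + 1)) ≤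
      Real.exp (ec n * (2 * n / (n + 1))) * ∑ ω, Complex.normSq (St b ω) ^ ((n:ℝ) / (n + 1)) := by
  have hn0 : (0:ℝ) < n := by exact_mod_cast hn
  have hT : 0 ≤ ∑ l, Complex.normSq (b l) := Finset.sum_nonneg fun _ _ => Complex.normSq_nonneg _
  rcases hT.eq_or_lt with h | h
  · rw [← h, Real.zero_rpow (by positivity), mul_zero]
    exact mul_nonneg (Real.exp_pos _).le (Finset.sum_nonneg fun _ _ => Real.rpow_nonneg (Complex.normSq_nonneg _) _)
  set T := ∑ l, Complex.normSq (b l) with hTd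
  set r : ℂ := (((Real.sqrt T)⁻¹ : ℝ) : ℂ) with hr
  have hrn : Complex.normSq r = T⁻¹ := by
    rw [hr, Complex.normSq_ofReal, ← mul_inv, Real.mul_self_sqrt h.le]
  have h1 := khin_norm n hn (fun l => r * b l) (by
    simp only [Complex.normSq_mul, ← Finset.mul_sum, hrn, ← hTd]
    exact inv_mul_cancel₀ h.ne')
  have hS : ∀ ω, St (fun l => r * b l) ω = r * St b ω := by
    intro ω; simp [St, Finset.mul_sum, mul_assoc]
  simp only [hS, Complex.normSq_mul, hrn] at h1
  simp_rw [Real.mul_rpow (inv_nonneg.2 h.le) (Complex.normSq_nonneg _)] at h1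
  rw [← Finset.mul_sum, Real.inv_rpow h.le] at h1
  have h2 : 0 < T ^ ((n:ℝ) / (n + 1)) := Real.rpow_pos_of_pos h _
  have h3 := mul_le_mul_of_nonneg_right h1 h2.le
  refine h3.trans (le_of_eq ?_)
  field_simp

/-- the constants -/
noncomputable def Cc (n : ℕ) : ℝ := Real.exp (∑ i ∈ Finset.Ico 1 n, ec i)

theorem bh_base {N : ℕ} (a : (Fin 1 → Fin N) → ℂ) (M : ℝ)
    (h : ∀ z : Fin 1 → Fin N → ℂ, (∀ j l, ‖z j l‖ ≤ 1) → ‖∑ i, a i * ∏ j, z j (i j)‖ ≤ M) :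
    ∑ i, ‖a i‖ ≤ M := by
  have h1 := h (fun _ l => (starRingEnd ℂ (a fun _ => l)) / ‖a fun _ => l‖) (by
    intro j l
    rw [norm_div, RCLike.norm_conj, Complex.norm_real, norm_norm]
    exact div_self_le_one _)
  have e : ∀ i : Fin 1 → Fin N, a i * ∏ j, (starRingEnd ℂ (a fun _ => i j)) / ‖a fun _ => i j‖ = (‖a i‖ : ℂ) := by
    intro i
    have hi : (fun _ => i 0) = i := by funext k; rw [Fin.fin_one_eq_zero k]
    simp only [Finset.univ_unique, Fin.default_eq_zero, Finset.prod_singleton, hi]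
    rcases eq_or_ne (a i) 0 with h0 | h0
    · simp [h0]
    · have : (‖a i‖ : ℂ) ≠ 0 := by exact_mod_cast norm_ne_zero_iff.2 h0
      rw [← mul_div_assoc, Complex.mul_conj, Complex.normSq_eq_norm_sq]
      push_cast
      field_simp
  simp_rw [e] at h1
  rw [← Complex.ofReal_sum, Complex.norm_real, Real.norm_of_nonneg (Finset.sum_nonneg fun _ _ => norm_nonneg _)] at h1
  exact h1

theorem bh_all {N : ℕ} (n : ℕ) (hn : 1 ≤ n) : ∀ (a : (Fin n → Fin N) → ℂ) (M : ℝ) (_ : 0 ≤ M)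
    (_ : ∀ z : Fin n → Fin N → ℂ, (∀ j l, ‖z j l‖ ≤ 1) → ‖∑ i, a i * ∏ j, z j (i j)‖ ≤ M),
    ∑ i, ‖a i‖ ^ ((2 * n : ℝ) / (n + 1)) ≤ (Cc n * M) ^ ((2 * n : ℝ) / (n + 1)) := by
  induction n, hn using Nat.le_induction with
  | base =>
    intro a M hM h
    have e : (2 * (1:ℕ) : ℝ) / ((1:ℕ) + 1) = 1 := by norm_num
    simp only [e, Real.rpow_one]
    simpa [Cc] using bh_base a M h
  | succ n hn ih =>
    intro a M hM h
    have hn0 : (0:ℝ) < n := by exact_mod_cast hn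
    have hC : ∀ n, 0 < Cc n := fun n => Real.exp_pos _
    have hCs : Cc (n+1) = Real.exp (ec n) * Cc n := by
      rw [Cc, Cc, Finset.sum_Ico_succ_top hn, Real.exp_add, mul_comm]
    have key : ∀ j : Fin (n+1), ∑ i : Fin n → Fin N,
        (∑ l, ‖a (Fin.insertNth j l i)‖ ^ (2:ℝ)) ^ ((n:ℝ) / (n + 1)) ≤
        (Cc (n+1) * M) ^ ((2 * n : ℝ) / (n + 1)) := by
      intro j
      have h1 : ∀ ω : Fin N → Fin 5, ∑ i : Fin n → Fin N,
          ‖St (fun l => a (Fin.insertNth j l i)) ω‖ ^ ((2 * n : ℝ) / (n + 1)) ≤ (Cc n * M) ^ ((2 * n : ℝ) / (n + 1)) := by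
        intro ω
        refine ih (fun i => St (fun l => a (Fin.insertNth j l i)) ω) M hM fun z hz => ?_
        have := h (Fin.insertNth j (fun l => zt ^ (ω l : ℕ)) z) (by
          intro k l
          induction k using Fin.succAboveCases j with
          | x => simp [zt_norm]
          | p k => simpa using hz k l)
        refine le_trans (le_of_eq ?_) this
        congr 1
        rw [← (Fin.insertNthEquiv (fun _ => Fin N) j).sum_comp, Fintype.sum_prod_type, Finset.sum_comm]
        refine Finset.sum_congr rfl fun i _ => ?_
        rw [St, Finset.sum_mul]
        refine Finset.sum_congr rfl fun l _ => ?_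
        rw [Fin.prod_univ_succAbove _ j]
        simp only [Fin.insertNthEquiv_apply, Fin.insertNth_apply_same, Fin.insertNth_apply_succAbove, mul_assoc]
        rfl
      have h2 : ∀ i : Fin n → Fin N, 5 ^ N * (∑ l, ‖a (Fin.insertNth j l i)‖ ^ (2:ℝ)) ^ ((n:ℝ) / (n + 1)) ≤
          Real.exp (ec n * (2 * n / (n + 1))) * ∑ ω, ‖St (fun l => a (Fin.insertNth j l i)) ω‖ ^ ((2 * n : ℝ) / (n + 1)) := by
        intro i
        have := khin n hn (fun l => a (Fin.insertNth j l i))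
        have e1 : ∀ c : ℂ, Complex.normSq c = ‖c‖ ^ (2:ℝ) := fun c => by
          rw [Complex.normSq_eq_norm_sq]; norm_cast
        simp only [e1] at this
        have e2 : (2:ℝ) * ((n:ℝ) / (n + 1)) = (2 * n : ℝ) / (n + 1) := by ring
        have e3 : ∀ c : ℂ, (‖c‖ ^ (2:ℝ)) ^ ((n:ℝ) / (n + 1)) = ‖c‖ ^ ((2 * n : ℝ) / (n + 1)) := fun c => by
          rw [← Real.rpow_mul (norm_nonneg _), e2]
        simp only [e3] at this
        exact this
      have h5 : (0:ℝ) < 5 ^ N := by positivity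
      have h3 := Finset.sum_le_sum fun i (_ : i ∈ Finset.univ) => h2 i
      rw [← Finset.mul_sum, ← Finset.mul_sum, Finset.sum_comm] at h3
      have h4 := Finset.sum_le_sum fun ω (_ : ω ∈ Finset.univ) => h1 ω
      rw [Finset.sum_const, Finset.card_univ, Fintype.card_fun, Fintype.card_fin, Fintype.card_fin, nsmul_eq_mul] at h4
      push_cast at h4
      have h6 := h3.trans (mul_le_mul_of_nonneg_left h4 (Real.exp_pos _).le)
      rw [mul_left_comm] at h6
      have h7 := le_of_mul_le_mul_left h6 h5
      refine h7.trans (le_of_eq ?_)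
      rw [hCs, mul_assoc, Real.mul_rpow (Real.exp_pos _).le (mul_nonneg (hC n).le hM), Real.exp_mul]
    have hCM : 0 ≤ Cc (n+1) * M := mul_nonneg (hC _).le hM
    have hb := blei n hn (fun i => ‖a i‖₊) ⟨Cc (n+1) * M, hCM⟩ (by
      intro j
      rw [← NNReal.coe_le_coe]
      push_cast
      exact key j)
    rw [← NNReal.coe_le_coe] at hb
    push_cast at hb
    have e : (2 * ((n + 1 : ℕ) : ℝ)) / (((n + 1 : ℕ) : ℝ) + 1) = (2 * (n + 1) : ℝ) / (n + 2) := by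
      push_cast; congr 1; ring
    rw [e]
    exact hb

theorem Cc_bound (n : ℕ) (hn : 17 ≤ n) : Cc n ≤ 1.01089344604 * ((n : ℝ) - 1) ^ (0.304975 : ℝ) := by
  induction n, hn using Nat.le_induction with
  | base =>
    have h1 : (1.01089344604:ℝ) * (((17:ℕ):ℝ) - 1) ^ (0.304975 : ℝ) =
        Real.exp (Real.log 1.01089344604 + Real.log 2 * (4 * 0.304975)) := by
      rw [Real.exp_add, Real.exp_log (by norm_num)]
      congr 1
      have : (((17:ℕ):ℝ) - 1) = 2 ^ (4:ℝ) := by norm_num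
      rw [this, ← Real.rpow_mul (by norm_num), Real.rpow_def_of_pos (by norm_num)]
    rw [h1, Cc]
    apply Real.exp_le_exp.2
    have h2 : 1 - (1.01089344604:ℝ)⁻¹ ≤ Real.log 1.01089344604 := Real.one_sub_inv_le_log_of_pos (by norm_num)
    have h3 := Real.log_two_gt_d9
    have h4 : ∑ i ∈ Finset.Ico 1 17, ec i = Real.log 2 / 3 + 0.2605 * (∑ i ∈ Finset.Ico (1 + 1 : ℕ) 17, 1 / (i:ℝ)) := by
      rw [Finset.sum_eq_sum_Ico_succ_bot (by norm_num), Finset.mul_sum]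
      congr 1
      refine Finset.sum_congr rfl fun i hi => ?_
      have := (Finset.mem_Ico.1 hi).1
      rw [ec, if_neg (by omega)]; ring
    rw [h4]
    have h5 : ∑ i ∈ Finset.Ico (1 + 1 : ℕ) 17, 1 / (i:ℝ) ≤ 2.381 := by
      norm_num [Finset.sum_Ico_succ_top]
    norm_num at h2 h3 h5 ⊢
    linarith
  | succ n hn ih =>
    have hn0 : (17:ℝ) ≤ n := by exact_mod_cast hn
    have hCs : Cc (n+1) = Cc n * Real.exp (ec n) := by
      rw [Cc, Cc, Finset.sum_Ico_succ_top (by omega), Real.exp_add]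
    have e : (((n + 1 : ℕ):ℝ) - 1) = ((n:ℝ) - 1) * (n / (n - 1)) := by
      have : (n:ℝ) - 1 ≠ 0 := by linarith
      push_cast; field_simp; ring
    have hq : 0 < (n:ℝ) / (n - 1) := div_pos (by linarith) (by linarith)
    rw [hCs, e, Real.mul_rpow (by linarith) hq.le, ← mul_assoc]
    refine mul_le_mul ih ?_ (Real.exp_pos _).le (mul_nonneg (by norm_num) (Real.rpow_nonneg (by linarith) _))
    rw [Real.rpow_def_of_pos hq]
    apply Real.exp_le_exp.2
    have h2 := Real.one_sub_inv_le_log_of_pos hq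
    have h3 : 1 - ((n:ℝ) / (n - 1))⁻¹ = 1 / n := by
      rw [inv_div]; field_simp; ring
    rw [h3] at h2
    rw [ec, if_neg (by omega)]
    have h4 : 0.2605 / (n:ℝ) ≤ 1 / n * 0.304975 := by
      rw [one_div_mul_eq_div]; gcongr; norm_num
    exact h4.trans (mul_le_mul_of_nonneg_right h2 (by norm_num))

theorem stmt10 (n : ℕ) (hn : 2 ^ 4 < n) (N : ℕ) (hN : 0 < N)
    (U : ContinuousMultilinearMap ℂ (fun _ : Fin n => (Fin N → ℂ)) ℂ) :
    BHcomplex n N U ≤ 1.01089344604 * ((n : ℝ) - 1) ^ (0.304975 : ℝ) * ‖U‖ := by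
  have hn' : 17 ≤ n := by omega
  have hn0 : (17:ℝ) ≤ n := by exact_mod_cast hn'
  have h := bh_all n (by omega) (fun i : Fin n → Fin N => U (fun k => Pi.single (i k) (1 : ℂ))) ‖U‖ (norm_nonneg _) (by
    intro z hz
    have e : U z = ∑ i : Fin n → Fin N, U (fun k => Pi.single (i k) (1 : ℂ)) * ∏ j, z j (i j) := by
      have hz' : z = fun k => ∑ l, z k l • (Pi.single l (1:ℂ) : Fin N → ℂ) := by
        funext k
        exact pi_eq_sum_univ' (z k)
      conv_lhs => rw [hz']
      rw [ContinuousMultilinearMap.map_sum]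
      refine Finset.sum_congr rfl fun i _ => ?_
      rw [ContinuousMultilinearMap.map_smul_univ, smul_eq_mul, mul_comm]
    rw [← e]
    refine (U.le_opNorm z).trans (mul_le_of_le_one_right (norm_nonneg _) ?_)
    refine Finset.prod_le_one (fun _ _ => norm_nonneg _) fun k _ => ?_
    exact (pi_norm_le_iff_of_nonneg zero_le_one).2 (hz k))
  have hCM : 0 ≤ Cc n * ‖U‖ := mul_nonneg (Real.exp_pos _).le (norm_nonneg _)
  have h1 : BHcomplex n N U ≤ Cc n * ‖U‖ := by
    rw [BHcomplex]
    refine (Real.rpow_le_rpow (Finset.sum_nonneg fun _ _ => Real.rpow_nonneg (norm_nonneg _) _) h (by positivity)).trans (le_of_eq ?_)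
    rw [← Real.rpow_mul hCM]
    have : (2 * n : ℝ) / (n + 1) * ((n + 1) / (2 * n)) = 1 := by field_simp
    rw [this, Real.rpow_one]
  exact h1.trans (mul_le_mul_of_nonneg_right (Cc_bound n hn') (norm_nonneg _))
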